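/- arXiv:1708.01598 — 3 statements merged into one kernel-verified Lean document; each statement's English description precedes it below -/
import Mathlib

section
/- Let s ≠ e in ℓ² and γ ∈ (0,π] (γ > 0). Then the midpoint (s + e)/2 belongs to the topological interior of the ommatidium C(s,e,γ). -/
/-- The ommatidium `C(s, e, γ)` in `ℓ²`. -/
noncomputable def ommatidium (s e : lp (fun _ : ℕ => ℝ) 2) (γ : ℝ) :
    Set (lp (fun _ : ℕ => ℝ) 2) :=
  {x | ‖x - s‖ ≤ ‖e - s‖ ∧ (x = s ∨ InnerProductGeometry.angle (x - s) (e - s) ≤ γ)}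

open scoped EuclideanGeometry

theorem dist_left_lt_dist_of_sbtw {V P : Type*} [NormedAddCommGroup V] [NormedSpace ℝ V]
    [MetricSpace P] [NormedAddTorsor V P] {x y z : P} (h : Sbtw ℝ x y z) :
    dist x y < dist x z := by
  have hpos : 0 < dist y z := dist_pos.mpr h.ne_right
  linarith [h.wbtw.dist_add_dist]

section SphericalSector

variable {V P : Type*} [NormedAddCommGroup V] [InnerProductSpace ℝ V] [MetricSpace P]
  [NormedAddTorsor V P] {s e x : P} {γ : ℝ}

/-- The closed spherical sector with apex `s`, radius `dist e s`, axis through `e` and half-angle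
`γ`: the analogue of an ommatidium in an affine space over any real inner product space. The apex is
included explicitly because `∠ s s e` is `π / 2` by convention. -/
def sphericalSector (s e : P) (γ : ℝ) : Set P :=
  {x | dist x s ≤ dist e s ∧ (x = s ∨ ∠ x s e ≤ γ)}

theorem mem_interior_sphericalSector (hx : x ≠ s) (hdist : dist x s < dist e s)
    (hangle : ∠ x s e < γ) : x ∈ interior (sphericalSector s e γ) := by
  have he : e ≠ s := dist_pos.mp (dist_nonneg.trans_lt hdist)
  have angle_continuousAt : ContinuousAt (fun y ↦ ∠ y s e) x :=
    (EuclideanGeometry.continuousAt_angle (x := (x, s, e)) hx he).comp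
      (f := fun y ↦ (y, s, e)) (by fun_prop)
  have dist_continuousAt : ContinuousAt (fun y ↦ dist y s) x := by fun_prop
  rw [mem_interior_iff_mem_nhds]
  filter_upwards [dist_continuousAt.eventually_lt_const hdist,
    angle_continuousAt.eventually_lt_const hangle] with y hy_dist hy_angle
  exact ⟨hy_dist.le, .inr hy_angle.le⟩

theorem ommatidium_midpoint_interior_general (hx : Sbtw ℝ s x e) (hγ : 0 < γ) :
    x ∈ interior (sphericalSector s e γ) := by
  refine mem_interior_sphericalSector hx.ne_left ?_ ?_
  · simpa only [dist_comm] using dist_left_lt_dist_of_sbtw hx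
  · rwa [hx.angle₂₁₃_eq_zero]

end SphericalSector

theorem ommatidium_eq_sphericalSector (s e : lp (fun _ : ℕ => ℝ) 2) (γ : ℝ) :
    ommatidium s e γ = sphericalSector s e γ := by
  simp only [ommatidium, sphericalSector, EuclideanGeometry.angle, dist_eq_norm, vsub_eq_sub]

/-- If `s ≠ e` and `0 < γ ≤ π`, then the midpoint `(s + e)/2` belongs to
the topological interior of `C(s, e, γ)`. -/
theorem ommatidium_midpoint_interior
    (s e : lp (fun _ : ℕ => ℝ) 2) (hse : s ≠ e)
    (γ : ℝ) (hγ0 : 0 < γ) (hγπ : γ ≤ Real.pi) :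
    ((1:ℝ)/2) • (s + e) ∈ interior (ommatidium s e γ) := by
  rw [ommatidium_eq_sphericalSector, one_div, ← invOf_eq_inv, ← midpoint_eq_smul_add]
  exact ommatidium_midpoint_interior_general (sbtw_midpoint_of_ne ℝ hse) hγ0
end

section
/- Let s ≠ e in ℓ² and 0 ≤ γ ≤ π/2. Then the ommatidium C(s,e,γ) is a convex set. -/
section CircularCone

open InnerProductGeometry
open scoped RealInnerProductSpace

variable {E : Type*} [NormedAddCommGroup E] [InnerProductSpace ℝ E] {u v w : E} {γ : ℝ}

theorem cos_mul_norm_mul_norm_le_inner_of_angle_le (h : angle u v ≤ γ) (hγ : γ ≤ Real.pi) :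
    Real.cos γ * (‖u‖ * ‖v‖) ≤ ⟪u, v⟫ := by
  rw [← cos_angle_mul_norm_mul_norm u v]
  gcongr
  exact Real.cos_le_cos_of_nonneg_of_le_pi (angle_nonneg u v) hγ h

theorem angle_le_of_cos_mul_norm_mul_norm_le_inner (hu : u ≠ 0) (hv : v ≠ 0) (hγ : 0 ≤ γ)
    (h : Real.cos γ * (‖u‖ * ‖v‖) ≤ ⟪u, v⟫) : angle u v ≤ γ := by
  have hcos : Real.cos γ ≤ Real.cos (angle u v) := by
    rw [← cos_angle_mul_norm_mul_norm u v] at h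
    exact le_of_mul_le_mul_right h (by positivity)
  contrapose! hcos
  exact Real.cos_lt_cos_of_nonneg_of_le_pi hγ (angle_le_pi u v) hcos

-- For `γ ≤ π / 2` the factor `cos γ` is nonnegative, so the triangle inequality for `‖u + v‖` can
-- be multiplied by it.
theorem angle_add_le_of_le_pi_div_two (hγ : γ ≤ Real.pi / 2) (hu : angle u w ≤ γ)
    (hv : angle v w ≤ γ) : angle (u + v) w ≤ γ := by
  have hγ_nonneg : 0 ≤ γ := (angle_nonneg u w).trans hu
  have hγ_le_pi : γ ≤ Real.pi := hγ.trans (half_le_self Real.pi_nonneg)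
  have hcos : 0 ≤ Real.cos γ := Real.cos_nonneg_of_neg_pi_div_two_le_of_le (by linarith) hγ
  rcases eq_or_ne w 0 with rfl | hw
  · simpa only [angle_zero_right] using hu
  rcases eq_or_ne (u + v) 0 with huv | huv
  · rw [eq_neg_of_add_eq_zero_right huv, angle_neg_left] at hv
    rw [huv, angle_zero_left]
    linarith
  apply angle_le_of_cos_mul_norm_mul_norm_le_inner huv hw hγ_nonneg
  calc
    Real.cos γ * (‖u + v‖ * ‖w‖) ≤ Real.cos γ * ((‖u‖ + ‖v‖) * ‖w‖) := by
      gcongr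
      exact norm_add_le u v
    _ = Real.cos γ * (‖u‖ * ‖w‖) + Real.cos γ * (‖v‖ * ‖w‖) := by ring
    _ ≤ ⟪u, w⟫ + ⟪v, w⟫ :=
      add_le_add (cos_mul_norm_mul_norm_le_inner_of_angle_le hu hγ_le_pi)
        (cos_mul_norm_mul_norm_le_inner_of_angle_le hv hγ_le_pi)
    _ = ⟪u + v, w⟫ := (inner_add_left u v w).symm

/-- The circular cone of half-angle `γ ≤ π / 2` around the axis `v`. The apex is adjoined
explicitly because `angle 0 v` has the conventional value `π / 2`. -/
def circularCone (v : E) (γ : ℝ) (hγ : γ ≤ Real.pi / 2) : ConvexCone ℝ E where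
  carrier := {u | u = 0 ∨ angle u v ≤ γ}
  smul_mem' := by
    rintro c hc u (rfl | hu)
    · exact Or.inl (smul_zero c)
    · exact Or.inr ((angle_smul_left_of_pos u v hc).trans_le hu)
  add_mem' := by
    rintro u (rfl | hu) u' (rfl | hu')
    · exact Or.inl (add_zero 0)
    · exact Or.inr (by rwa [zero_add])
    · exact Or.inr (by rwa [add_zero])
    · exact Or.inr (angle_add_le_of_le_pi_div_two hγ hu hu')

theorem mem_circularCone {hγ : γ ≤ Real.pi / 2} :
    u ∈ circularCone v γ hγ ↔ u = 0 ∨ angle u v ≤ γ :=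
  Iff.rfl

theorem ommatidium_convex_general (s e : E) (hγ : γ ≤ Real.pi / 2) :
    Convex ℝ {x | ‖x - s‖ ≤ ‖e - s‖ ∧ (x = s ∨ angle (x - s) (e - s) ≤ γ)} := by
  have hball : Convex ℝ {x | ‖x - s‖ ≤ ‖e - s‖} := by
    simpa only [Metric.closedBall, dist_eq_norm] using convex_closedBall s ‖e - s‖
  have hcone : Convex ℝ {x | x = s ∨ angle (x - s) (e - s) ≤ γ} := by
    simpa only [Set.preimage, SetLike.mem_coe, mem_circularCone, ← sub_eq_add_neg, sub_eq_zero]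
      using (circularCone (e - s) γ hγ).convex.translate_preimage_left (-s)
  exact hball.inter hcone

end CircularCone

/-- If `s ≠ e` and `0 ≤ γ ≤ π/2`, then the ommatidium `C(s, e, γ)` is
convex. -/
theorem ommatidium_convex
    (s e : lp (fun _ : ℕ => ℝ) 2) (hse : s ≠ e)
    (γ : ℝ) (hγ0 : 0 ≤ γ) (hγ : γ ≤ Real.pi / 2) :
    Convex ℝ (ommatidium s e γ) :=
  ommatidium_convex_general s e hγ
end

section
/- Let X be an infinite-dimensional strictly convex real normed space. Then for every m ∈ ℕ with m ≥ 1: if E ⊆ X satisfies B(θ,1) ⊆ E ⊆ B̄(θ,1) and E = A₁ ∪ … ∪ A_m where A₁, …, A_m are pairwise congruent, then either θ belongs to the interior of every A_i, or θ belongs to the interior of no A_i. In particular, a ball in X cannot be covered by finitely many congruent subsets so that its centre belongs to the interiors of some of them and not of the others. -/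
/-!
Two points at distance `2` in a closed unit ball of a strictly convex space have the centre of the
ball as their midpoint. If the closure of `A i` contains an antipodal pair `x, -x` of the unit
sphere and `f` is a congruence from `A i` to `A j`, then `f x` and `f (-x)` lie at distance `2` in
the unit balls around both `0` and `f 0`, so `f 0 = 0`, and `f` carries the property that `0` is
interior from `A i` to `A j`. By the Lusternik–Schnirelmann theorem the closure of some `A i`, and
then of all of them, does contain an antipodal pair.

That theorem follows from the Borsuk–Ulam theorem. To find a common zero of odd functions `g i`,
colour `x` by the sign of `g i x` to get odd maps `s i` to `ZMod 2`. The cup product of the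
coboundaries of the `s i` takes the value `1` on a chain of arbitrarily small simplices in the
boundary of a cross-polytope. So some small simplex has vertices of both colours for every `i`,
which a Lebesgue number excludes if the `g i` have no common zero.
-/

open Metric

lemma dist_lineMap_lineMap_le_add {V : Type*} [SeminormedAddCommGroup V] [NormedSpace ℝ V]
    (x y v : V) {r r' : ℝ} (hr : r ∈ Set.Icc 0 1) :
    dist (AffineMap.lineMap x v r) (AffineMap.lineMap y v r') ≤
      dist x y + dist r r' * dist y v := by
  refine (dist_triangle _ (AffineMap.lineMap y v r) _).trans (add_le_add ?_ ?_)
  · rw [AffineMap.lineMap_apply_module, AffineMap.lineMap_apply_module, dist_add_right,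
      dist_smul₀, Real.norm_of_nonneg (by linarith [hr.2])]
    exact mul_le_of_le_one_left dist_nonneg (by linarith [hr.1])
  · rw [dist_lineMap_lineMap]

/-- Mod 2 chains of ordered, possibly degenerate, simplices: the list `[x₀, …, xₖ]` is the
`k`-simplex with these vertices in this order, and the empty list spans degree `-1`, so that the
complex is augmented. -/
abbrev OrderedChain (X : Type*) := List X →₀ ZMod 2

namespace OrderedChain

variable {X Y M : Type*} [AddCommGroup M] [Module (ZMod 2) M]

/-- The chain consisting of a single ordered simplex. -/
noncomputable def simplex (l : List X) : OrderedChain X := Finsupp.single l 1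

/-- The chains all of whose simplices lie in `A`. -/
noncomputable def spannedBy (A : Set (List X)) : Submodule (ZMod 2) (OrderedChain X) :=
  Submodule.span (ZMod 2) (simplex '' A)

/-- The linear extension of a function given on simplices. -/
noncomputable def lift (φ : List X → M) : OrderedChain X →ₗ[ZMod 2] M :=
  Finsupp.linearCombination (ZMod 2) φ

@[simp]
lemma lift_simplex (φ : List X → M) (l : List X) : lift φ (simplex l) = φ l := by
  simp [lift, simplex]

lemma simplex_mem_spannedBy {A : Set (List X)} {l : List X} (hl : l ∈ A) :
    simplex l ∈ spannedBy A :=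
  Submodule.subset_span (Set.mem_image_of_mem simplex hl)

lemma spannedBy_mono {A B : Set (List X)} (h : A ⊆ B) : spannedBy A ≤ spannedBy B :=
  Submodule.span_mono (Set.image_mono h)

lemma map_mem_of_mem_spannedBy {A : Set (List X)} {W : Submodule (ZMod 2) M}
    {f : OrderedChain X →ₗ[ZMod 2] M} (hf : ∀ l ∈ A, f (simplex l) ∈ W) {c : OrderedChain X}
    (hc : c ∈ spannedBy A) : f c ∈ W :=
  (Submodule.span_le.2 (Set.image_subset_iff.2 hf) : spannedBy A ≤ W.comap f) hc

lemma eq_of_mem_spannedBy {A : Set (List X)} {f g : OrderedChain X →ₗ[ZMod 2] M}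
    (h : ∀ l ∈ A, f (simplex l) = g (simplex l)) {c : OrderedChain X} (hc : c ∈ spannedBy A) :
    f c = g c :=
  LinearMap.eqOn_span (Set.forall_mem_image.2 h) hc

lemma hom_ext {f g : OrderedChain X →ₗ[ZMod 2] M} (h : ∀ l, f (simplex l) = g (simplex l)) :
    f = g :=
  Finsupp.lhom_ext' fun l => LinearMap.ext_ring (h l)

/-- The chain map induced by a map of vertices. -/
noncomputable def map (f : X → Y) : OrderedChain X →ₗ[ZMod 2] OrderedChain Y :=
  lift fun l => simplex (l.map f)

/-- The cone operator, which adds `x` as a new first vertex. -/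
noncomputable def cone (x : X) : OrderedChain X →ₗ[ZMod 2] OrderedChain X :=
  lift fun l => simplex (x :: l)

/-- The sum of the codimension one faces of an ordered simplex. -/
noncomputable def faces : List X → OrderedChain X
  | [] => 0
  | x :: l => simplex l + cone x (faces l)

/-- The boundary operator. -/
noncomputable def boundary : OrderedChain X →ₗ[ZMod 2] OrderedChain X :=
  lift faces

@[simp]
lemma map_simplex (f : X → Y) (l : List X) : map f (simplex l) = simplex (l.map f) :=
  lift_simplex _ l

@[simp]
lemma cone_simplex (x : X) (l : List X) : cone x (simplex l) = simplex (x :: l) :=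
  lift_simplex _ l

@[simp]
lemma boundary_simplex_nil : boundary (simplex ([] : List X)) = 0 :=
  lift_simplex _ _

@[simp]
lemma boundary_simplex_cons (x : X) (l : List X) :
    boundary (simplex (x :: l)) = simplex l + cone x (boundary (simplex l)) := by
  simp only [boundary, lift_simplex, faces]

@[simp]
lemma map_id : map (id : X → X) = LinearMap.id :=
  hom_ext fun l => by simp

lemma map_map {Z : Type*} (g : Y → Z) (f : X → Y) (c : OrderedChain X) :
    map g (map f c) = map (g ∘ f) c :=
  LinearMap.congr_fun (hom_ext fun l => by simp : map g ∘ₗ map f = map (g ∘ f)) c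

lemma map_cone (f : X → Y) (x : X) (c : OrderedChain X) :
    map f (cone x c) = cone (f x) (map f c) :=
  LinearMap.congr_fun (hom_ext fun l => by simp : map f ∘ₗ cone x = cone (f x) ∘ₗ map f) c

lemma boundary_cone (x : X) (c : OrderedChain X) :
    boundary (cone x c) = c + cone x (boundary c) :=
  LinearMap.congr_fun
    (hom_ext fun l => by simp : boundary ∘ₗ cone x = LinearMap.id + cone x ∘ₗ boundary) c

lemma boundary_boundary (c : OrderedChain X) : boundary (boundary c) = 0 := by
  refine LinearMap.congr_fun (hom_ext fun l => ?_ : boundary ∘ₗ boundary = 0) c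
  induction l with
  | nil => simp
  | cons x l ih =>
    rw [LinearMap.comp_apply, LinearMap.zero_apply] at ih ⊢
    rw [boundary_simplex_cons, map_add, boundary_cone, ih, map_zero, add_zero,
      ZModModule.add_self]

lemma boundary_map (f : X → Y) (c : OrderedChain X) : boundary (map f c) = map f (boundary c) := by
  refine LinearMap.congr_fun (hom_ext fun l => ?_ : boundary ∘ₗ map f = map f ∘ₗ boundary) c
  induction l with
  | nil => simp
  | cons x l ih =>
    simp only [LinearMap.comp_apply, map_simplex] at ih
    simp [ih, map_cone]

/-- The prism decomposition of `[0, 1] × l`, with bottom mapped by `p` and top by `q`: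
the sum over `i` of the simplices `[p x₀, …, p xᵢ, q xᵢ, …, q xₖ]`. -/
noncomputable def prismSimplices (p q : X → Y) : List X → OrderedChain Y
  | [] => 0
  | x :: l => simplex (p x :: q x :: l.map q) + cone (p x) (prismSimplices p q l)

/-- The prism operator, a chain homotopy from `map p` to `map q`. -/
noncomputable def prism (p q : X → Y) : OrderedChain X →ₗ[ZMod 2] OrderedChain Y :=
  lift (prismSimplices p q)

@[simp]
lemma prism_simplex_nil (p q : X → Y) : prism p q (simplex []) = 0 :=
  lift_simplex _ _

@[simp]
lemma prism_simplex_cons (p q : X → Y) (x : X) (l : List X) :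
    prism p q (simplex (x :: l)) =
      simplex (p x :: q x :: l.map q) + cone (p x) (prism p q (simplex l)) := by
  simp only [prism, lift_simplex, prismSimplices]

lemma prism_cone (p q : X → Y) (x : X) (c : OrderedChain X) :
    prism p q (cone x c) = cone (p x) (cone (q x) (map q c)) + cone (p x) (prism p q c) :=
  LinearMap.congr_fun (hom_ext fun l => by simp :
    prism p q ∘ₗ cone x = cone (p x) ∘ₗ cone (q x) ∘ₗ map q + cone (p x) ∘ₗ prism p q) c

lemma boundary_prism_add_prism_boundary (p q : X → Y) (c : OrderedChain X) :
    boundary (prism p q c) + prism p q (boundary c) = map q c - map p c := by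
  refine LinearMap.congr_fun (hom_ext fun l => ?_ :
    boundary ∘ₗ prism p q + prism p q ∘ₗ boundary = map q - map p) c
  simp only [LinearMap.add_apply, LinearMap.comp_apply, LinearMap.sub_apply,
    ZModModule.sub_eq_add]
  induction l with
  | nil => simp [ZModModule.add_self]
  | cons x l ih =>
    have hcone := congrArg (cone (p x)) ih
    simp only [map_add, map_simplex, cone_simplex] at hcone
    have hcancel := ZModModule.add_self (prism p q (simplex l))
    have hcancel' := ZModModule.add_self (cone (p x) (simplex (l.map q)))
    have hcancel'' :=
      ZModModule.add_self (cone (p x) (cone (q x) (boundary (simplex (l.map q)))))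
    simp only [boundary_simplex_cons, prism_simplex_cons, map_add, boundary_cone, prism_cone,
      ← boundary_map, map_simplex, List.map_cons, cone_simplex] at hcancel' hcancel'' ⊢
    linear_combination (norm := module) hcone + hcancel + hcancel' + hcancel''

lemma prism_simplex_mem_spannedBy (p q : X → Y) (l : List X) :
    prism p q (simplex l) ∈ spannedBy {l' | ∀ y ∈ l', ∃ x ∈ l, y = p x ∨ y = q x} := by
  induction l with
  | nil => simp
  | cons x l ih =>
    rw [prism_simplex_cons]
    refine add_mem (simplex_mem_spannedBy ?_) (map_mem_of_mem_spannedBy (fun l' hl' => ?_) ih)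
    · simp only [Set.mem_ofPred_eq, List.mem_cons, List.mem_map]
      rintro y (rfl | rfl | ⟨z, hz, rfl⟩)
      exacts [⟨x, by simp⟩, ⟨x, by simp⟩, ⟨z, by simp [hz]⟩]
    · rw [cone_simplex]
      refine simplex_mem_spannedBy fun y hy => ?_
      rcases List.mem_cons.1 hy with rfl | hy
      · exact ⟨x, by simp⟩
      · obtain ⟨z, hz, hyz⟩ := hl' y hy
        exact ⟨z, List.mem_cons_of_mem x hz, hyz⟩

lemma boundary_sum_prism (p : ℕ → X → Y) (N : ℕ) {z : OrderedChain X} (hz : boundary z = 0) :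
    boundary (∑ j ∈ Finset.range N, prism (p j) (p (j + 1)) z) = map (p N) z - map (p 0) z := by
  rw [map_sum, ← Finset.sum_range_sub (fun j => map (p j) z)]
  refine Finset.sum_congr rfl fun j _ => ?_
  rw [← boundary_prism_add_prism_boundary, hz, map_zero, add_zero]

/-- The cup product `ds₁ ∪ ⋯ ∪ dsₖ` of the coboundaries of `0`-cochains `s₁, …, sₖ`, evaluated on
an ordered simplex: the product of the `sᵢ xᵢ₋₁ + sᵢ xᵢ` on `[x₀, …, xₖ]`, and `0` outside
degree `k`. -/
def cupCoboundaries : List (X → ZMod 2) → List X → ZMod 2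
  | [], [_] => 1
  | s :: ss, x :: y :: l => (s x + s y) * cupCoboundaries ss (y :: l)
  | _, _ => 0

/-- The cup product `s ∪ ds₁ ∪ ⋯ ∪ dsₖ`, a primitive of `ds ∪ ds₁ ∪ ⋯ ∪ dsₖ`. -/
def cupPrimitive (s : X → ZMod 2) (ss : List (X → ZMod 2)) : List X → ZMod 2
  | [] => 0
  | x :: l => s x * cupCoboundaries ss (x :: l)

lemma lift_cupPrimitive_cone (s : X → ZMod 2) (ss : List (X → ZMod 2)) (x : X)
    (c : OrderedChain X) :
    lift (cupPrimitive s ss) (cone x c) = s x * lift (cupCoboundaries ss) (cone x c) :=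
  LinearMap.congr_fun (hom_ext fun l => by simp [cupPrimitive] :
    lift (cupPrimitive s ss) ∘ₗ cone x = s x • (lift (cupCoboundaries ss) ∘ₗ cone x)) c

lemma lift_cupPrimitive_boundary {ss : List (X → ZMod 2)}
    (hss : ∀ c, lift (cupCoboundaries ss) (boundary c) = 0) (s : X → ZMod 2)
    (c : OrderedChain X) :
    lift (cupPrimitive s ss) (boundary c) = lift (cupCoboundaries (s :: ss)) c := by
  refine LinearMap.congr_fun
    (hom_ext fun l => ?_ :
      lift (cupPrimitive s ss) ∘ₗ boundary = lift (cupCoboundaries (s :: ss))) c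
  rw [LinearMap.comp_apply, lift_simplex]
  match l with
  | [] => simp [cupCoboundaries]
  | [x] => simp [cupPrimitive, cupCoboundaries]
  | x :: y :: l =>
    have hcone : lift (cupCoboundaries ss) (cone x (boundary (simplex (y :: l)))) =
        cupCoboundaries ss (y :: l) := by
      have := hss (simplex (x :: y :: l))
      rwa [boundary_simplex_cons, map_add, lift_simplex, CharTwo.add_eq_zero, eq_comm] at this
    rw [boundary_simplex_cons, map_add, lift_simplex, lift_cupPrimitive_cone, hcone,
      cupPrimitive, cupCoboundaries]
    ring

lemma lift_cupCoboundaries_boundary (ss : List (X → ZMod 2)) (c : OrderedChain X) :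
    lift (cupCoboundaries ss) (boundary c) = 0 := by
  induction ss generalizing c with
  | nil =>
    have hcone (x y : X) (c : OrderedChain X) :
        lift (cupCoboundaries []) (cone x (cone y c)) = 0 :=
      LinearMap.congr_fun (hom_ext fun l => by simp [cupCoboundaries] :
        lift (cupCoboundaries []) ∘ₗ cone x ∘ₗ cone y = 0) c
    refine LinearMap.congr_fun (hom_ext fun l => ?_ : lift (cupCoboundaries []) ∘ₗ boundary = 0) c
    match l with
    | [] => simp
    | [x] => simp [cupCoboundaries]
    | [x, y] => simp [cupCoboundaries, CharTwo.add_self_eq_zero]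
    | x :: y :: z :: l => simp [cupCoboundaries, hcone]
  | cons s ss ih =>
    rw [← lift_cupPrimitive_boundary ih, boundary_boundary, map_zero]

@[simp]
lemma cupCoboundaries_nil_right (ss : List (X → ZMod 2)) : cupCoboundaries ss [] = 0 := by
  cases ss <;> rfl

lemma cupCoboundaries_map {ss : List (X → ZMod 2)} {f : X → X} {l : List X}
    (hss : ∀ s ∈ ss, ∀ x ∈ l, s (f x) = s x + 1) :
    cupCoboundaries ss (l.map f) = cupCoboundaries ss l := by
  induction ss generalizing l with
  | nil =>
    match l with
    | [] | [x] | x :: y :: l => simp [cupCoboundaries]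
  | cons s ss ih =>
    match l with
    | [] | [x] => simp [cupCoboundaries]
    | x :: y :: l =>
      have hx := hss s (by simp) x (by simp)
      have hy := hss s (by simp) y (by simp)
      have htail := ih (l := y :: l) fun s' hs' z hz =>
        hss s' (List.mem_cons_of_mem s hs') z (List.mem_cons_of_mem x hz)
      rw [List.map_cons] at htail
      rw [List.map_cons, List.map_cons, cupCoboundaries, cupCoboundaries, htail, hx, hy,
        add_add_add_comm, CharTwo.add_self_eq_zero, add_zero]

lemma cupPrimitive_add_cupPrimitive_map {s : X → ZMod 2} {ss : List (X → ZMod 2)} {f : X → X}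
    {l : List X} (hss : ∀ s' ∈ s :: ss, ∀ x ∈ l, s' (f x) = s' x + 1) :
    cupPrimitive s ss l + cupPrimitive s ss (l.map f) = cupCoboundaries ss l := by
  cases l with
  | nil => simp [cupPrimitive]
  | cons x l =>
    have hmap := cupCoboundaries_map fun s' hs' => hss s' (List.mem_cons_of_mem s hs')
    rw [List.map_cons] at hmap
    rw [List.map_cons, cupPrimitive, cupPrimitive, hmap, hss s (by simp) x (by simp), ← add_mul,
      ← add_assoc, CharTwo.add_self_eq_zero, zero_add, one_mul]

lemma exists_ne_of_cupCoboundaries_ne_zero {ss : List (X → ZMod 2)} {l : List X}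
    (h : cupCoboundaries ss l ≠ 0) {s : X → ZMod 2} (hs : s ∈ ss) :
    ∃ x ∈ l, ∃ y ∈ l, s x ≠ s y := by
  induction ss generalizing l with
  | nil => simp at hs
  | cons s' ss ih =>
    match l with
    | [] => simp [cupCoboundaries] at h
    | [x] => simp [cupCoboundaries] at h
    | x :: y :: l =>
      rw [cupCoboundaries] at h
      rcases List.mem_cons.1 hs with rfl | hs
      · refine ⟨x, by simp, y, by simp, fun hxy => left_ne_zero_of_mul h ?_⟩
        rw [hxy, CharTwo.add_self_eq_zero]
      · obtain ⟨a, ha, b, hb, hab⟩ := ih (right_ne_zero_of_mul h) hs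
        exact ⟨a, List.mem_cons_of_mem x ha, b, List.mem_cons_of_mem x hb, hab⟩

section SmallSimplices

/-- The ordered simplices with vertices in `S` at pairwise distances less than `ε`. -/
def smallSimplices [PseudoMetricSpace X] (S : Set X) (ε : ℝ) : Set (List X) :=
  {l | (∀ x ∈ l, x ∈ S) ∧ ∀ x ∈ l, ∀ y ∈ l, dist x y < ε}

lemma smallSimplices_mono [PseudoMetricSpace X] {S T : Set X} (h : S ⊆ T) (ε : ℝ) :
    smallSimplices S ε ⊆ smallSimplices T ε := fun _ hl =>
  ⟨fun x hx => h (hl.1 x hx), hl.2⟩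

lemma map_mem_spannedBy_smallSimplices [PseudoMetricSpace X] [PseudoMetricSpace Y] {f : X → Y}
    (hf : Isometry f) {S : Set X} {T : Set Y} (hST : Set.MapsTo f S T) {ε : ℝ}
    {c : OrderedChain X} (hc : c ∈ spannedBy (smallSimplices S ε)) :
    map f c ∈ spannedBy (smallSimplices T ε) := by
  refine map_mem_of_mem_spannedBy (fun l hl => ?_) hc
  rw [map_simplex]
  refine simplex_mem_spannedBy ⟨?_, ?_⟩
  · exact List.forall_mem_map.2 fun x hx => hST (hl.1 x hx)
  · refine List.forall_mem_map.2 fun x hx => List.forall_mem_map.2 fun y hy => ?_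
    rw [hf.dist_eq]
    exact hl.2 x hx y hy

variable {V : Type*} [SeminormedAddCommGroup V] [NormedSpace ℝ V]

lemma mem_smallSimplices_of_contraction {S : Set V} {v : V} {C δ ε a b : ℝ} (ha : 0 ≤ a)
    (hb : b ≤ 1) (hC : ∀ x ∈ S, dist x v ≤ C) (hε : δ + (b - a) * C ≤ ε)
    {l l' : List V} (hl : l ∈ smallSimplices S δ)
    (hl' : ∀ y ∈ l', ∃ x ∈ l, ∃ r ∈ Set.Icc a b, y = AffineMap.lineMap x v r) :
    l' ∈ smallSimplices (convexJoin ℝ S {v}) ε := by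
  refine ⟨fun y hy => ?_, fun y hy y' hy' => ?_⟩
  · obtain ⟨x, hx, r, hr, rfl⟩ := hl' y hy
    refine mem_convexJoin.2 ⟨x, hl.1 x hx, v, rfl, ?_⟩
    rw [segment_eq_image_lineMap]
    exact Set.mem_image_of_mem _ ⟨ha.trans hr.1, hr.2.trans hb⟩
  · obtain ⟨x, hx, r, hr, rfl⟩ := hl' y hy
    obtain ⟨x', hx', r', hr', rfl⟩ := hl' y' hy'
    calc dist (AffineMap.lineMap x v r) (AffineMap.lineMap x' v r')
        ≤ dist x x' + dist r r' * dist x' v :=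
          dist_lineMap_lineMap_le_add x x' v ⟨ha.trans hr.1, hr.2.trans hb⟩
      _ ≤ dist x x' + (b - a) * C := by
          gcongr
          · exact sub_nonneg.2 (hr.1.trans hr.2)
          · exact Real.dist_le_of_mem_Icc hr hr'
          · exact hC x' (hl.1 x' hx')
      _ < δ + (b - a) * C := by gcongr; exact hl.2 x hx x' hx'
      _ ≤ ε := hε

/- The cone over `z` with apex `v` fills `z` by long simplices. Contracting `z` to `v` in many
short steps, with a prism for each step, fills `z` by small ones. -/
lemma exists_boundary_eq_of_map_const_eq_zero {S : Set V} (hS : Bornology.IsBounded S) (v : V)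
    {δ ε : ℝ} (hδε : δ < ε) {z : OrderedChain V} (hz : z ∈ spannedBy (smallSimplices S δ))
    (hcycle : boundary z = 0) (hconst : map (fun _ => v) z = 0) :
    ∃ c ∈ spannedBy (smallSimplices (convexJoin ℝ S {v}) ε), boundary c = z := by
  obtain ⟨C, hC₀, hC⟩ := hS.subset_closedBall_lt 0 v
  obtain ⟨N, hN⟩ := exists_nat_gt (C / (ε - δ))
  have hN₀ : (0 : ℝ) < N := (div_pos hC₀ (sub_pos.2 hδε)).trans hN
  let p (j : ℕ) (x : V) : V := AffineMap.lineMap x v ((j : ℝ) / N)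
  have hp_zero : p 0 = id := by funext x; simp [p]
  have hp_last : p N = fun _ => v := by funext x; simp [p, hN₀.ne']
  refine ⟨∑ j ∈ Finset.range N, prism (p j) (p (j + 1)) z,
    sum_mem fun j hj => map_mem_of_mem_spannedBy (fun l hl => ?_) hz, ?_⟩
  · have hmono : (j : ℝ) / N ≤ (j + 1 : ℕ) / N := by gcongr; exact j.le_succ
    have hj_le : ((j + 1 : ℕ) : ℝ) / N ≤ 1 :=
      (div_le_one hN₀).2 (by exact_mod_cast Finset.mem_range.1 hj)
    have hstep : δ + ((j + 1 : ℕ) / N - j / N) * C ≤ ε := by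
      rw [div_lt_iff₀ (sub_pos.2 hδε)] at hN
      have : (((j + 1 : ℕ) : ℝ) / N - j / N) * C = C / N := by push_cast; ring
      have : C / N ≤ ε - δ := (div_le_iff₀ hN₀).2 (by linarith)
      linarith
    refine spannedBy_mono (fun l' hl' => mem_smallSimplices_of_contraction (by positivity) hj_le
      (fun x hx => hC hx) hstep hl fun y hy => ?_) (prism_simplex_mem_spannedBy _ _ l)
    obtain ⟨x, hx, rfl | rfl⟩ := hl' y hy
    exacts [⟨x, hx, _, Set.left_mem_Icc.2 hmono, rfl⟩, ⟨x, hx, _, Set.right_mem_Icc.2 hmono, rfl⟩]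
  · rw [boundary_sum_prism p N hcycle, hp_zero, hp_last, hconst, map_id, LinearMap.id_apply,
      zero_sub, ZModModule.neg_eq_self]

end SmallSimplices

end OrderedChain

section CrossPolytope

variable {ι : Type*} [Fintype ι]

/-- The boundary of the cross-polytope spanned by the `±eᵢ` with `i ∈ t`, a sphere of dimension
`t.card - 1`: the unit sphere of the `ℓ¹` norm on the vectors supported in `t`. -/
def crossPolytopeBoundary (t : Finset ι) : Set (ι → ℝ) :=
  {x | (∀ i ∉ t, x i = 0) ∧ ∑ i, |x i| = 1}

lemma ne_zero_of_mem_crossPolytopeBoundary {t : Finset ι} {x : ι → ℝ}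
    (hx : x ∈ crossPolytopeBoundary t) : x ≠ 0 := by
  rintro rfl
  simpa using hx.2

lemma neg_mem_crossPolytopeBoundary {t : Finset ι} {x : ι → ℝ}
    (hx : x ∈ crossPolytopeBoundary t) : -x ∈ crossPolytopeBoundary t :=
  ⟨fun i hi => by simp [hx.1 i hi], by simpa using hx.2⟩

lemma crossPolytopeBoundary_subset_closedBall (t : Finset ι) :
    crossPolytopeBoundary t ⊆ closedBall 0 1 := fun x hx =>
  mem_closedBall_zero_iff.2 <| (pi_norm_le_iff_of_nonneg zero_le_one).2 fun i =>
    (Finset.single_le_sum (f := fun j => |x j|) (fun _ _ => abs_nonneg _)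
      (Finset.mem_univ i)).trans_eq hx.2

lemma isCompact_crossPolytopeBoundary (t : Finset ι) : IsCompact (crossPolytopeBoundary t) := by
  refine (isCompact_closedBall 0 1).of_isClosed_subset ?_
    (crossPolytopeBoundary_subset_closedBall t)
  simp only [crossPolytopeBoundary, Set.ofPred_and, Set.ofPred_forall]
  exact (isClosed_biInter fun i _ => isClosed_eq (by fun_prop) continuous_const).inter
    (isClosed_eq (by fun_prop) continuous_const)

lemma single_mem_crossPolytopeBoundary [DecidableEq ι] {t : Finset ι} {a : ι} (ha : a ∈ t) :
    Pi.single a 1 ∈ crossPolytopeBoundary t :=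
  ⟨fun i hi => Pi.single_eq_of_ne (by rintro rfl; exact hi ha) 1, by
    simp [Pi.single_apply, apply_ite abs]⟩

lemma convexJoin_crossPolytopeBoundary_subset [DecidableEq ι] {t : Finset ι} {a : ι}
    (ha : a ∉ t) :
    convexJoin ℝ (crossPolytopeBoundary t) {Pi.single a 1} ⊆
      crossPolytopeBoundary (insert a t) := by
  intro y hy
  obtain ⟨x, hx, _, rfl, u, v, hu, hv, huv, rfl⟩ := mem_convexJoin.1 hy
  refine ⟨fun i hi => ?_, ?_⟩
  · rw [Finset.mem_insert, not_or] at hi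
    simp [hx.1 i hi.2, hi.1]
  · have habs (i : ι) : |(u • x + v • Pi.single a (1 : ℝ) : ι → ℝ) i| =
        u * |x i| + v * (Pi.single a 1 : ι → ℝ) i := by
      by_cases hi : i = a
      · subst hi
        simp [hx.1 i ha, abs_of_nonneg hv]
      · simp [hi, abs_mul, abs_of_nonneg hu]
    simp_rw [habs, Finset.sum_add_distrib, ← Finset.mul_sum, hx.2]
    simpa using huv

open OrderedChain

/- The chain for `s :: ss` is a small filling of `z = c + (-c)`, where `c` is the chain for `ss`.
As `ds ∪ ds₁ ∪ ⋯` has the primitive `s ∪ ds₁ ∪ ⋯`, its value on the filling is the value of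
the primitive on `z`, and this is the value of `ds₁ ∪ ⋯` on `c` because `s` is odd. -/
lemma exists_small_chain_cupCoboundaries_eq_one
    {ss : List ((ι → ℝ) → ZMod 2)} (hss : ∀ s ∈ ss, ∀ x ≠ 0, s (-x) = s x + 1) {t : Finset ι}
    (ht : t.card = ss.length + 1) {ε : ℝ} (hε : 0 < ε) :
    ∃ c ∈ spannedBy (smallSimplices (crossPolytopeBoundary t) ε),
      boundary (c + map Neg.neg c) = 0 ∧ lift (cupCoboundaries ss) c = 1 := by
  classical
  induction ss generalizing t ε with
  | nil =>
    obtain ⟨a, rfl⟩ := Finset.card_eq_one.1 ht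
    refine ⟨simplex [Pi.single a 1], simplex_mem_spannedBy ⟨?_, ?_⟩, ?_, ?_⟩
    · simpa using single_mem_crossPolytopeBoundary (Finset.mem_singleton_self a)
    · simpa using hε
    · simp [ZModModule.add_self]
    · simp [cupCoboundaries]
  | cons s ss ih =>
    obtain ⟨a, t, ha, rfl, hcard⟩ := Finset.card_eq_succ.1 ht
    obtain ⟨c, hc, hcycle, hone⟩ :=
      ih (fun s' hs' => hss s' (List.mem_cons_of_mem s hs')) hcard (half_pos hε)
    have hz := add_mem hc
      (map_mem_spannedBy_smallSimplices isometry_neg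
        (fun _ => neg_mem_crossPolytopeBoundary) hc)
    have hconst : map (fun _ => (Pi.single a 1 : ι → ℝ)) (c + map Neg.neg c) = 0 := by
      rw [map_add, map_map, Function.comp_def, ZModModule.add_self]
    obtain ⟨c', hc', hfill⟩ := exists_boundary_eq_of_map_const_eq_zero
      (isCompact_crossPolytopeBoundary t).isBounded (Pi.single a 1) (half_lt_self hε) hz hcycle
      hconst
    refine ⟨c', spannedBy_mono (smallSimplices_mono (convexJoin_crossPolytopeBoundary_subset ha) ε)
      hc', ?_, ?_⟩
    · rw [map_add, boundary_map, hfill, map_add, map_map, neg_comp_neg, map_id, LinearMap.id_apply,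
        add_comm (map _ c), ZModModule.add_self]
    · rw [← lift_cupPrimitive_boundary (lift_cupCoboundaries_boundary ss), hfill, ← hone]
      refine eq_of_mem_spannedBy (f := lift (cupPrimitive s ss) ∘ₗ (LinearMap.id + map Neg.neg))
        (fun l hl => ?_) hc
      simpa using cupPrimitive_add_cupPrimitive_map fun s' hs' x hx =>
        hss s' hs' x (ne_zero_of_mem_crossPolytopeBoundary (hl.1 x hx))

lemma exists_forall_exists_ne_of_odd {n : ℕ} {s : Fin n → (Fin (n + 1) → ℝ) → ZMod 2}
    (hs : ∀ i, ∀ x ≠ 0, s i (-x) = s i x + 1) {ε : ℝ} (hε : 0 < ε) :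
    ∃ x ∈ crossPolytopeBoundary Finset.univ, ∀ i, ∃ y ∈ ball x ε, ∃ y' ∈ ball x ε,
      s i y ≠ s i y' := by
  obtain ⟨c, hc, -, hone⟩ := exists_small_chain_cupCoboundaries_eq_one (ss := List.ofFn s)
    (List.forall_mem_ofFn_iff.2 hs) (t := Finset.univ) (by simp) hε
  obtain ⟨l, hl, hne⟩ : ∃ l ∈ smallSimplices (crossPolytopeBoundary Finset.univ) ε,
      cupCoboundaries (List.ofFn s) l ≠ 0 := by
    by_contra! h
    have := eq_of_mem_spannedBy (f := lift (cupCoboundaries (List.ofFn s))) (g := 0)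
      (fun l hl => by simpa using h l hl) hc
    simp [hone] at this
  obtain ⟨x, hx⟩ := List.exists_mem_of_ne_nil l fun h => hne (by simp [h])
  refine ⟨x, hl.1 x hx, fun i => ?_⟩
  obtain ⟨y, hy, y', hy', hyy'⟩ := exists_ne_of_cupCoboundaries_ne_zero hne
    (List.mem_ofFn.2 ⟨i, rfl⟩)
  exact ⟨y, hl.2 y hy x hx, y', hl.2 y' hy' x hx, hyy'⟩

end CrossPolytope

section BorsukUlam

/- Zeros of `g` are coloured by comparing `x` with `-x` in an arbitrary linear order. -/
lemma exists_odd_coloring {V : Type*} [AddCommGroup V] [IsAddTorsionFree V] {g : V → ℝ}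
    (hg : ∀ x ≠ 0, g (-x) = -g x) :
    ∃ s : V → ZMod 2, (∀ x ≠ 0, s (-x) = s x + 1) ∧ (∀ x, 0 < g x → s x = 1) ∧
      ∀ x, g x < 0 → s x = 0 := by
  classical
  refine ⟨fun x => if 0 < g x ∨ g x = 0 ∧ WellOrderingRel x (-x) then 1 else 0,
    fun x hx => ?_, fun x hpos => if_pos (Or.inl hpos),
    fun x hneg => if_neg (by rintro (h | h) <;> linarith)⟩
  have hswap : (0 < g (-x) ∨ g (-x) = 0 ∧ WellOrderingRel (-x) (- -x)) ↔
      ¬(0 < g x ∨ g x = 0 ∧ WellOrderingRel x (-x)) := by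
    rw [hg x hx, neg_neg, neg_pos, neg_eq_zero]
    rcases lt_trichotomy (g x) 0 with hneg | hzero | hpos
    · simp [hneg, hneg.le, hneg.ne]
    · have hne : x ≠ -x := fun h => hx (self_eq_neg.1 h)
      have := trichotomous_of WellOrderingRel x (-x)
      have hasymm : WellOrderingRel x (-x) → ¬WellOrderingRel (-x) x := asymm
      simp only [hzero, lt_irrefl, true_and, false_or]
      tauto
    · simp [hpos, hpos.le, hpos.ne']
  simp only [hswap, ite_not]
  split_ifs
  · rw [CharTwo.add_self_eq_zero]
  · rw [zero_add]

lemma exists_mem_crossPolytopeBoundary_forall_eq_zero {n : ℕ}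
    {g : Fin n → (Fin (n + 1) → ℝ) → ℝ} (hg : ∀ i, ContinuousOn (g i) {0}ᶜ)
    (hodd : ∀ i, ∀ x ≠ 0, g i (-x) = -g i x) :
    ∃ x ∈ crossPolytopeBoundary Finset.univ, ∀ i, g i x = 0 := by
  by_contra! hne
  choose s hs hs_pos hs_neg using fun i => exists_odd_coloring (hodd i)
  let U : Fin n × ZMod 2 → Set (Fin (n + 1) → ℝ) := fun ij =>
    {0}ᶜ ∩ g ij.1 ⁻¹' (if ij.2 = 1 then Set.Ioi 0 else Set.Iio 0)
  have hU_open (ij : Fin n × ZMod 2) : IsOpen (U ij) :=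
    (hg ij.1).isOpen_inter_preimage isOpen_compl_singleton
      (by split_ifs; exacts [isOpen_Ioi, isOpen_Iio])
  have hU_cover : crossPolytopeBoundary Finset.univ ⊆ ⋃ ij, U ij := by
    intro x hx
    have hx₀ := ne_zero_of_mem_crossPolytopeBoundary hx
    obtain ⟨i, hi⟩ := hne x hx
    rcases hi.lt_or_gt with hneg | hpos
    · exact Set.mem_iUnion.2 ⟨(i, 0), hx₀, by simpa using hneg⟩
    · exact Set.mem_iUnion.2 ⟨(i, 1), hx₀, by simpa using hpos⟩
  have hs_U {ij : Fin n × ZMod 2} {x} (hx : x ∈ U ij) : s ij.1 x = if ij.2 = 1 then 1 else 0 := by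
    have := hx.2
    split_ifs at this ⊢
    exacts [hs_pos _ x this, hs_neg _ x this]
  obtain ⟨ε, hε, hball⟩ := lebesgue_number_lemma_of_metric
    (isCompact_crossPolytopeBoundary Finset.univ) hU_open hU_cover
  obtain ⟨x, hx, hbi⟩ := exists_forall_exists_ne_of_odd hs hε
  obtain ⟨ij, hij⟩ := hball x hx
  obtain ⟨y, hy, y', hy', hyy'⟩ := hbi ij.1
  exact hyy' ((hs_U (hij hy)).trans (hs_U (hij hy')).symm)

variable {X : Type*} [NormedAddCommGroup X] [NormedSpace ℝ X]

theorem borsuk_ulam {n : ℕ} (hn : ((n + 1 : ℕ) : Cardinal) ≤ Module.rank ℝ X) {g : Fin n → X → ℝ}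
    (hg : ∀ i, ContinuousOn (g i) (sphere 0 1))
    (hodd : ∀ i, ∀ x ∈ sphere (0 : X) 1, g i (-x) = -g i x) :
    ∃ x ∈ sphere (0 : X) 1, ∀ i, g i x = 0 := by
  obtain ⟨L, hL⟩ := Module.le_rank_iff_exists_linearMap.1 hn
  let u (x : Fin (n + 1) → ℝ) : X := NormedSpace.normalize (L x)
  have hu_mem {x} (hx : x ≠ 0) : u x ∈ sphere (0 : X) 1 := mem_sphere_zero_iff_norm.2 <|
    NormedSpace.norm_normalize_eq_one_iff.2 ((map_ne_zero_iff L hL).2 hx)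
  have hu_neg (x) : u (-x) = -u x := by simp only [u, map_neg, NormedSpace.normalize_neg]
  have hL_cont : Continuous L := L.continuous_of_finiteDimensional
  have hu_cont : ContinuousOn u {0}ᶜ := by
    refine ContinuousOn.smul (hL_cont.norm.continuousOn.inv₀ fun x hx => ?_) hL_cont.continuousOn
    exact norm_ne_zero_iff.2 ((map_ne_zero_iff L hL).2 hx)
  obtain ⟨x, hx, hzero⟩ := exists_mem_crossPolytopeBoundary_forall_eq_zero
    (g := fun i x => g i (u x)) (fun i => (hg i).comp hu_cont fun x hx => hu_mem hx)
    (fun i x hx => by rw [hu_neg, hodd i _ (hu_mem hx)])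
  exact ⟨u x, hu_mem (ne_zero_of_mem_crossPolytopeBoundary hx), hzero⟩

theorem lusternik_schnirelmann {n : ℕ} (hn : ((n + 1 : ℕ) : Cardinal) ≤ Module.rank ℝ X)
    {F : Fin (n + 1) → Set X} (hF : ∀ i, IsClosed (F i)) (hcover : sphere 0 1 ⊆ ⋃ i, F i) :
    ∃ i, ∃ x ∈ sphere (0 : X) 1, x ∈ F i ∧ -x ∈ F i := by
  obtain ⟨x, hx, hzero⟩ := borsuk_ulam hn
    (g := fun i x => infDist x (F i.succ) - infDist (-x) (F i.succ)) (by fun_prop)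
    (fun i x _ => by simp)
  have hneg (i : Fin n) {y : X} (hy : y ∈ F i.succ)
      (heq : infDist y (F i.succ) = infDist (-y) (F i.succ)) : -y ∈ F i.succ := by
    have hmem := (hF i.succ).mem_iff_infDist_zero ⟨y, hy⟩ (x := -y)
    rw [hmem, ← heq, infDist_zero_of_mem hy]
  obtain ⟨i, hi⟩ := Set.mem_iUnion.1 (hcover hx)
  obtain ⟨j, hj⟩ := Set.mem_iUnion.1 (hcover (by simpa using hx : -x ∈ sphere (0 : X) 1))
  cases i using Fin.cases with
  | succ i => exact ⟨i.succ, x, hx, hi, hneg i hi (sub_eq_zero.1 (hzero i))⟩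
  | zero =>
    cases j using Fin.cases with
    | succ j =>
      refine ⟨j.succ, x, hx, ?_, hj⟩
      simpa using hneg j hj (by rw [neg_neg, sub_eq_zero.1 (hzero j)])
    | zero => exact ⟨0, x, hx, hi, hj⟩

end BorsukUlam

section StrictConvexSpace

variable {X : Type*} [NormedAddCommGroup X] [NormedSpace ℝ X]

lemma midpoint_eq_of_mem_closedBall_of_dist_eq [StrictConvexSpace ℝ X] {o a b : X} {r : ℝ}
    (ha : a ∈ closedBall o r) (hb : b ∈ closedBall o r) (hab : dist a b = 2 * r) :
    midpoint ℝ a b = o := by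
  have htri := dist_triangle_right a b o
  rw [mem_closedBall] at ha hb
  refine (eq_midpoint_of_dist_eq_half ?_ ?_).symm
  · linarith
  · rw [dist_comm]; linarith

/-- The closure of `A` contains two antipodal points of the unit sphere. For subsets of the unit
ball of a strictly convex space this locates the centre of the ball in terms of `A` alone. -/
def HasAntipodalPair (A : Set X) : Prop :=
  ∃ x, ‖x‖ = 1 ∧ x ∈ closure A ∧ -x ∈ closure A

variable [StrictConvexSpace ℝ X] {A : Set X} {f : X → X}

lemma HasAntipodalPair.image (hA : HasAntipodalPair A) (hf : Isometry f)
    (hfA : f '' A ⊆ closedBall 0 1) : f 0 = 0 ∧ HasAntipodalPair (f '' A) := by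
  obtain ⟨x, hx, hxA, hxA'⟩ := hA
  have hclosure {y : X} (hy : y ∈ closure A) : f y ∈ closure (f '' A) :=
    image_closure_subset_closure_image hf.continuous ⟨y, hy, rfl⟩
  have hball := closure_minimal hfA isClosed_closedBall
  have hdist : dist (f x) (f (-x)) = 2 * 1 := by
    rw [hf.dist_eq, dist_eq_norm, sub_neg_eq_add, ← two_smul ℝ x, norm_smul, hx]
    norm_num
  have hmid_zero := midpoint_eq_of_mem_closedBall_of_dist_eq (hball (hclosure hxA))
    (hball (hclosure hxA')) hdist
  have hmid_image : midpoint ℝ (f x) (f (-x)) = f 0 := by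
    refine midpoint_eq_of_mem_closedBall_of_dist_eq ?_ ?_ hdist <;>
      simp [mem_closedBall, hf.dist_eq, hx]
  have hneg : f (-x) = -f x := by
    rw [eq_neg_iff_add_eq_zero, add_comm, ← midpoint_add_self ℝ (f x), hmid_zero, add_zero]
  have hzero : f 0 = 0 := hmid_image.symm.trans hmid_zero
  refine ⟨hzero, f x, ?_, hclosure hxA, hneg ▸ hclosure hxA'⟩
  rw [← dist_zero_right, ← hzero, hf.dist_eq, dist_zero_right, hx]

end StrictConvexSpace

lemma mem_interior_of_mem_interior_image {X Y : Type*} [TopologicalSpace X] [TopologicalSpace Y]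
    {f : X → Y} (hf : Continuous f) (hinj : Function.Injective f) {A : Set X} {x : X}
    (hx : f x ∈ interior (f '' A)) : x ∈ interior A := by
  rw [← hinj.preimage_image A]
  exact preimage_interior_subset_interior_preimage hf hx

theorem center_in_all_or_no_interiors_infinite_dim_general
    {X : Type*} [NormedAddCommGroup X] [NormedSpace ℝ X] [StrictConvexSpace ℝ X] {m : ℕ}
    (hm : (m : Cardinal) ≤ Module.rank ℝ X) {A : Fin m → Set X}
    (hcover : sphere 0 1 ⊆ closure (⋃ i, A i)) (hball : ∀ i, A i ⊆ closedBall 0 1)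
    (hcong : ∀ i j, ∃ f : X → X, Isometry f ∧ f '' A i = A j) :
    (∀ i, (0 : X) ∈ interior (A i)) ∨ ∀ i, (0 : X) ∉ interior (A i) := by
  cases m with
  | zero => exact Or.inl nofun
  | succ n =>
    rw [closure_iUnion_of_finite] at hcover
    obtain ⟨i₀, x, hx, hpair⟩ := lusternik_schnirelmann hm (fun i => isClosed_closure) hcover
    have hpairs (j) : HasAntipodalPair (A j) := by
      obtain ⟨f, hf, hfA⟩ := hcong i₀ j
      have hA : HasAntipodalPair (A i₀) := ⟨x, mem_sphere_zero_iff_norm.1 hx, hpair⟩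
      exact hfA ▸ (hA.image hf (hfA ▸ hball j)).2
    have hinterior (i j) (hj : 0 ∈ interior (A j)) : 0 ∈ interior (A i) := by
      obtain ⟨f, hf, hfA⟩ := hcong i j
      have hf_zero : f 0 = 0 := ((hpairs i).image hf (hfA ▸ hball j)).1
      refine mem_interior_of_mem_interior_image hf.continuous hf.injective ?_
      rwa [hf_zero, hfA]
    by_cases h : ∃ j, 0 ∈ interior (A j)
    · exact Or.inl fun i => hinterior i _ h.choose_spec
    · exact Or.inr (not_exists.1 h)

/-- Let `X` be an infinite-dimensional strictly convex real normed space.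
Then for every `m ≥ 1`: if `B(θ,1) ⊆ E ⊆ B̄(θ,1)` and `E` is the union of `m` pairwise
congruent sets `A i`, then either `θ` is in the interior of every `A i`, or of none.
In particular, a ball in `X` cannot be covered by finitely many congruent subsets so
that the centre belongs to the interiors of some of them and not of the others. -/
theorem center_in_all_or_no_interiors_infinite_dim
    {X : Type*} [NormedAddCommGroup X] [NormedSpace ℝ X]
    (hinf : ¬ FiniteDimensional ℝ X)
    (hNCS : ∀ x y : X, x ≠ y → ‖x‖ = 1 → ‖y‖ = 1 →
      ∀ l : ℝ, 0 < l → l < 1 → ‖l • x + (1 - l) • y‖ < 1) :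
    ∀ m : ℕ, 1 ≤ m →
      ∀ (E : Set X), Metric.ball (0 : X) 1 ⊆ E → E ⊆ Metric.closedBall (0 : X) 1 →
      ∀ A : Fin m → Set X, E = ⋃ i, A i →
      (∀ i j, ∃ f : X → X, Function.Surjective f ∧
        (∀ x y : X, ‖f x - f y‖ = ‖x - y‖) ∧ f '' A i = A j) →
      ((∀ i, (0 : X) ∈ interior (A i)) ∨ (∀ i, (0 : X) ∉ interior (A i))) := by
  intro m _ E hE hE' A hEA hcong
  have : StrictConvexSpace ℝ X := .of_norm_combo_lt_one fun x y hx hy hxy =>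
    ⟨1 / 2, 1 - 1 / 2, by ring, hNCS x y hxy hx hy _ (by norm_num) (by norm_num)⟩
  have hrank : (m : Cardinal) ≤ Module.rank ℝ X :=
    Cardinal.natCast_le_aleph0.trans (not_lt.1 (mt Module.rank_lt_aleph0_iff.1 hinf))
  have hcover : sphere 0 1 ⊆ closure (⋃ i, A i) := by
    rw [← hEA]
    exact (sphere_subset_closedBall.trans_eq (closure_ball 0 one_ne_zero).symm).trans
      (closure_mono hE)
  refine center_in_all_or_no_interiors_infinite_dim_general hrank hcover
    (fun i => (Set.subset_iUnion A i).trans (hEA ▸ hE')) fun i j => ?_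
  obtain ⟨f, -, hf, hfA⟩ := hcong i j
  exact ⟨f, .of_dist_eq fun x y => by rw [dist_eq_norm, dist_eq_norm, hf], hfA⟩
end
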